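/- Let f ∈ L^∞(ℝⁿ), ψ₁(y)=e^{−|y|²}, ψ₂(y)=e^{|y|²}, and let ψ be a Schwartz function such that ψ·ψ₂ is Schwartz (e.g. ψ(y) = y_j y_k e^{−2|y|²}). Then for all x,ξ ∈ ℝⁿ and t ∈ (0,1]: |𝓕(f · ψ((·−x)/t))(ξ)| ≤ (2π)^{−n/2} ( H_{∞,f} * |𝓕(ψ(·/t)·ψ₂)| )(ξ), where H_{∞,f}(ξ) = sup_x |𝓕(f ψ₁(·−x))(ξ)| and the convolution is in ξ. -/

import Mathlib

open MeasureTheory Complex Real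
open scoped RealInnerProductSpace ENNReal

noncomputable section

abbrev E (n : ℕ) := EuclideanSpace ℝ (Fin n)

/-- The plane wave `e^{-i⟨y,ξ⟩}`. -/
def eK {n : ℕ} (y ξ : E n) : ℂ := Complex.exp (-Complex.I * Complex.ofReal ⟪y, ξ⟫)

/-- `H_{∞,f}(ξ) = sup_x |𝓕(f ψ₁(·−x))(ξ)|` with `ψ₁ = e^{-|·|²}`. -/
def Hinf {n : ℕ} (f : E n → ℂ) (ξ : E n) : ℝ :=
  ⨆ x : E n, ‖∫ y, f y * Complex.ofReal (Real.exp (-‖y - x‖ ^ 2)) * eK y ξ‖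

/-!
Since `ψ₁ ψ₂ = 1`, the function `f · ψ((· - x)/t)` is the product of `f · ψ₁(· - x)` and the
translate by `x` of `ψ(·/t) ψ₂`, which is a Schwartz function: for `t ≤ 1` the growth of `ψ₂` only
uses up part of the decay of `e^{-|y/t|²}`. The Fourier transform of a product is a convolution, a
translation multiplies the Fourier transform by a phase and so disappears from absolute values, and
the transform of the first factor is bounded by `H_{∞,f}`. With the kernel `e^{-i⟨y,ξ⟩}` the
constant in front of the convolution is `(2π)^{-n}`, which is at most `(2π)^{-n/2}`.
-/

open scoped FourierTransform SchwartzMap ContDiff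

section Gaussian

variable {H : Type*} [NormedAddCommGroup H] [InnerProductSpace ℝ H]

theorem hasTemperateGrowth_exp_neg_mul_norm_sq {c : ℝ} (hc : 0 ≤ c) :
    (fun y : H => Real.exp (-c * ‖y‖ ^ 2)).HasTemperateGrowth := by
  have exp_contDiff : ContDiff ℝ ∞ fun s : ℝ => Real.exp (-c * s) := by fun_prop
  have range_subset : Set.range (fun y : H => ‖y‖ ^ 2) ⊆ Set.Ici 0 :=
    Set.range_subset_iff.mpr fun y => sq_nonneg ‖y‖
  have deriv_bound (m : ℕ) {s : ℝ} (hs : s ∈ Set.Ici 0) :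
      ‖iteratedFDerivWithin ℝ m (fun s : ℝ => Real.exp (-c * s)) (Set.Ici 0) s‖ ≤ c ^ m := by
    rw [norm_iteratedFDerivWithin_eq_norm_iteratedDerivWithin,
      iteratedDerivWithin_eq_iteratedDeriv (uniqueDiffOn_Ici 0)
        (exp_contDiff.of_le (mod_cast le_top)).contDiffAt hs,
      iteratedDeriv_exp_const_mul, norm_mul, norm_pow, norm_neg, Real.norm_of_nonneg hc,
      Real.norm_of_nonneg (Real.exp_pos _).le]
    exact mul_le_of_le_one_right (pow_nonneg hc m)
      (Real.exp_le_one_iff.mpr (mul_nonpos_of_nonpos_of_nonneg (neg_nonpos.mpr hc) hs))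
  refine Function.HasTemperateGrowth.comp' (g := fun s : ℝ => Real.exp (-c * s)) range_subset
    (uniqueDiffOn_Ici 0) exp_contDiff.contDiffOn (fun N => ?_)
    (Function.hasTemperateGrowth_norm_sq H)
  refine ⟨0, (1 + c) ^ N, by positivity, fun m hm s hs => ?_⟩
  calc ‖iteratedFDerivWithin ℝ m (fun s : ℝ => Real.exp (-c * s)) (Set.Ici 0) s‖
      ≤ c ^ m := deriv_bound m hs
    _ ≤ (1 + c) ^ m := by gcongr; linarith
    _ ≤ (1 + c) ^ N := by gcongr; linarith
    _ = (1 + c) ^ N * (1 + ‖s‖) ^ 0 := by rw [pow_zero, mul_one]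

theorem exists_schwartzMap_eq_comp_smul_mul_exp (Ψ : 𝓢(H, ℂ)) {t : ℝ} (ht₀ : t ≠ 0)
    (ht₁ : |t| ≤ 1) :
    ∃ G : 𝓢(H, ℂ), ⇑G = fun y => Ψ (t⁻¹ • y) *
      Complex.ofReal (Real.exp (-‖t⁻¹ • y‖ ^ 2)) * Complex.ofReal (Real.exp (‖y‖ ^ 2)) := by
  have one_le : 1 ≤ t⁻¹ ^ 2 := by
    rw [inv_pow, one_le_inv₀ (by positivity)]
    exact (sq_le_one_iff_abs_le_one t).mpr ht₁
  have growth := hasTemperateGrowth_exp_neg_mul_norm_sq (H := H) (sub_nonneg.mpr one_le)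
  let dilation : H ≃L[ℝ] H := .smulLeft (Units.mk0 t⁻¹ (inv_ne_zero ht₀))
  refine ⟨SchwartzMap.smulLeftCLM ℂ (fun y : H => Real.exp (-(t⁻¹ ^ 2 - 1) * ‖y‖ ^ 2))
    (SchwartzMap.compCLMOfContinuousLinearEquiv ℝ dilation Ψ), funext fun y => ?_⟩
  have exponent_eq : -(t⁻¹ ^ 2 - 1) * ‖y‖ ^ 2 = -‖t⁻¹ • y‖ ^ 2 + ‖y‖ ^ 2 := by
    rw [norm_smul, mul_pow, Real.norm_eq_abs, sq_abs]
    ring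
  rw [SchwartzMap.smulLeftCLM_apply_apply growth,
    SchwartzMap.compCLMOfContinuousLinearEquiv_apply, exponent_eq, Real.exp_add, Complex.real_smul,
    Complex.ofReal_mul, mul_comm, ← mul_assoc]
  rfl

end Gaussian

section Fourier

variable {V : Type*} [NormedAddCommGroup V] [InnerProductSpace ℝ V] [FiniteDimensional ℝ V]
  [MeasurableSpace V] [BorelSpace V] {f g φ ψ : V → ℂ}

theorem fourier_mul_eq_integral (hf : Integrable f) (hg_cont : Continuous g) (hg : Integrable g)
    (hg_fourier : Integrable (𝓕 g)) (ξ : V) :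
    𝓕 (fun y => f y * g y) ξ = ∫ η, 𝓕 f η * 𝓕 g (ξ - η) := by
  have fourier_reflect (y : V) : 𝓕 (fun η => 𝓕 g (ξ - η)) y = 𝐞 (-⟪y, ξ⟫) • g y := by
    rw [← congrFun (hg_cont.fourierInv_fourier_eq hg hg_fourier) y, fourier_eq, fourierInv_eq,
      ← integral_sub_left_eq_self _ volume ξ, Circle.smul_def, ← integral_smul]
    congr 1 with η
    rw [sub_sub_cancel, ← Circle.smul_def, smul_smul, ← AddChar.map_add_eq_mul, inner_sub_left,
      real_inner_comm y ξ]
    congr 2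
    ring
  calc 𝓕 (fun y => f y * g y) ξ = ∫ y, f y * 𝓕 (fun η => 𝓕 g (ξ - η)) y := by
        rw [fourier_eq]
        simp only [fourier_reflect, mul_smul_comm]
    _ = ∫ η, 𝓕 f η * 𝓕 g (ξ - η) := by
        simpa only [smul_eq_mul, flip_innerₗ] using!
          (VectorFourier.integral_fourierIntegral_smul_eq_flip (L := innerₗ V)
            continuous_fourierChar continuous_inner hf (hg_fourier.comp_sub_left ξ)).symm

/-- The Fourier transform `∫ g(y) e^{-i⟨y,ξ⟩} dy` in angular frequency, as opposed to Mathlib's `𝓕`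
with the kernel `e^{-2πi⟨y,ξ⟩}`. On `E n` the kernel is `eK`. -/
def angularFourier (g : V → ℂ) (ξ : V) : ℂ :=
  ∫ y, g y * Complex.exp (-Complex.I * Complex.ofReal ⟪y, ξ⟫)

theorem angularFourier_eq_fourier (g : V → ℂ) (ξ : V) :
    angularFourier g ξ = 𝓕 g ((2 * π)⁻¹ • ξ) := by
  rw [angularFourier, fourier_eq']
  congr 1 with y
  rw [smul_eq_mul, mul_comm, inner_smul_right]
  congr 2
  push_cast
  field_simp

theorem norm_angularFourier_le (g : V → ℂ) (ξ : V) : ‖angularFourier g ξ‖ ≤ ∫ y, ‖g y‖ := by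
  rw [angularFourier_eq_fourier]
  exact VectorFourier.norm_fourierIntegral_le_integral_norm _ _ _ _ _

theorem continuous_angularFourier (hg : Integrable g) : Continuous (angularFourier g) := by
  have continuous_fourier : Continuous (𝓕 g) :=
    VectorFourier.fourierIntegral_continuous continuous_fourierChar continuous_inner hg
  simp only [funext (angularFourier_eq_fourier g)]
  fun_prop

theorem integrable_angularFourier_iff :
    Integrable (angularFourier g) ↔ Integrable (𝓕 g) := by
  rw [funext (angularFourier_eq_fourier g)]
  exact integrable_comp_smul_iff volume (𝓕 g) (by positivity)

theorem norm_angularFourier_comp_sub (g : V → ℂ) (x ξ : V) :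
    ‖angularFourier (fun y => g (y - x)) ξ‖ = ‖angularFourier g ξ‖ := by
  have translate_eq :=
    congrFun (VectorFourier.fourierIntegral_comp_add_right 𝐞 volume (innerₗ V) g (-x))
      ((2 * π)⁻¹ • ξ)
  simp only [Function.comp_def, ← sub_eq_add_neg] at translate_eq
  rw [angularFourier_eq_fourier, angularFourier_eq_fourier]
  exact (congrArg norm translate_eq).trans (Circle.norm_smul _ _)

theorem angularFourier_mul_eq_integral (hf : Integrable f) (hg_cont : Continuous g)
    (hg : Integrable g) (hg_fourier : Integrable (angularFourier g)) (ξ : V) :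
    angularFourier (fun y => f y * g y) ξ =
      ((2 * π) ^ Module.finrank ℝ V)⁻¹ * ∫ η, angularFourier f η * angularFourier g (ξ - η) := by
  simp only [angularFourier_eq_fourier, smul_sub]
  rw [fourier_mul_eq_integral hf hg_cont hg (integrable_angularFourier_iff.mp hg_fourier),
    Measure.integral_comp_inv_smul_of_nonneg volume
      (fun η => 𝓕 f η * 𝓕 g ((2 * π)⁻¹ • ξ - η)) (by positivity), Complex.real_smul]
  push_cast
  field_simp

/-- The largest size at frequency `ξ` of the Fourier transform of `f` seen through a translate of
the window `φ`. On `E n` with the Gaussian window it is `Hinf f`. The supremum is taken in `ℝ`; it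
is finite for bounded `f` and integrable `φ`. -/
def windowedFourierSup (φ f : V → ℂ) (ξ : V) : ℝ :=
  ⨆ x : V, ‖angularFourier (fun y => f y * φ (y - x)) ξ‖

theorem windowedFourierSup_nonneg (φ f : V → ℂ) (ξ : V) : 0 ≤ windowedFourierSup φ f ξ :=
  Real.iSup_nonneg fun _ => norm_nonneg _

theorem integrable_mul_comp_sub (hf : MemLp f ∞) (hφ : Integrable φ) (x : V) :
    Integrable fun y => f y * φ (y - x) :=
  (hφ.comp_sub_right x).mul_of_top_right hf

theorem norm_angularFourier_mul_comp_sub_le (hf : MemLp f ∞) (hφ : Integrable φ) (x ξ : V) :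
    ‖angularFourier (fun y => f y * φ (y - x)) ξ‖ ≤ lpNorm f ∞ volume * ∫ y, ‖φ y‖ :=
  calc ‖angularFourier (fun y => f y * φ (y - x)) ξ‖ ≤ ∫ y, ‖f y * φ (y - x)‖ :=
        norm_angularFourier_le _ _
    _ ≤ ∫ y, lpNorm f ∞ volume * ‖φ (y - x)‖ := by
        refine integral_mono_ae (integrable_mul_comp_sub hf hφ x).norm
          ((hφ.comp_sub_right x).norm.const_mul _) ?_
        filter_upwards [ae_le_lpNorm_exponent_top hf] with y hy
        rw [norm_mul]
        gcongr
    _ = lpNorm f ∞ volume * ∫ y, ‖φ y‖ := by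
        rw [integral_const_mul, integral_sub_right_eq_self (fun y => ‖φ y‖) x]

theorem bddAbove_range_norm_angularFourier (hf : MemLp f ∞) (hφ : Integrable φ) (ξ : V) :
    BddAbove (Set.range fun x : V => ‖angularFourier (fun y => f y * φ (y - x)) ξ‖) :=
  ⟨_, Set.forall_mem_range.mpr fun x => norm_angularFourier_mul_comp_sub_le hf hφ x ξ⟩

theorem norm_angularFourier_le_windowedFourierSup (hf : MemLp f ∞) (hφ : Integrable φ) (x ξ : V) :
    ‖angularFourier (fun y => f y * φ (y - x)) ξ‖ ≤ windowedFourierSup φ f ξ :=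
  le_ciSup (bddAbove_range_norm_angularFourier hf hφ ξ) x

theorem windowedFourierSup_le (hf : MemLp f ∞) (hφ : Integrable φ) (ξ : V) :
    windowedFourierSup φ f ξ ≤ lpNorm f ∞ volume * ∫ y, ‖φ y‖ :=
  ciSup_le fun x => norm_angularFourier_mul_comp_sub_le hf hφ x ξ

theorem measurable_windowedFourierSup (hf : MemLp f ∞) (hφ : Integrable φ) :
    Measurable (windowedFourierSup φ f) :=
  have continuous_norm (x : V) :
      Continuous fun ξ => ‖angularFourier (fun y => f y * φ (y - x)) ξ‖ :=
    (continuous_angularFourier (integrable_mul_comp_sub hf hφ x)).norm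
  (lowerSemicontinuous_ciSup (bddAbove_range_norm_angularFourier hf hφ) fun x =>
    (continuous_norm x).lowerSemicontinuous).measurable

theorem integrable_windowedFourierSup_mul (hf : MemLp f ∞) (hφ : Integrable φ) {h : V → ℝ}
    (hh : Integrable h) : Integrable fun η => windowedFourierSup φ f η * h η := by
  refine hh.bdd_mul (c := lpNorm f ∞ volume * ∫ y, ‖φ y‖)
    (measurable_windowedFourierSup hf hφ).aestronglyMeasurable (.of_forall fun η => ?_)
  rw [Real.norm_of_nonneg (windowedFourierSup_nonneg φ f η)]
  exact windowedFourierSup_le hf hφ η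

theorem integrable_angularFourier_schwartzMap (G : 𝓢(V, ℂ)) : Integrable (angularFourier G) :=
  integrable_angularFourier_iff.mpr (SchwartzMap.fourier_coe G ▸ (𝓕 G).integrable)

theorem integrable_exp_neg_norm_sq :
    Integrable fun y : V => Complex.ofReal (Real.exp (-‖y‖ ^ 2)) := by
  simpa using GaussianFourier.integrable_cexp_neg_mul_sq_norm_add (V := V) (b := 1) (by simp) 0 0

theorem stmt_16_general (hf : MemLp f ∞) (hφ : Integrable φ) (hg_cont : Continuous g)
    (hg : Integrable g) (hg_fourier : Integrable (angularFourier g))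
    (hψ : ∀ y, ψ y = φ y * g y) (x ξ : V) :
    ‖angularFourier (fun y => f y * ψ (y - x)) ξ‖ ≤
      ((2 * π) ^ Module.finrank ℝ V)⁻¹ *
        ∫ η, windowedFourierSup φ f η * ‖angularFourier g (ξ - η)‖ := by
  have translate_integrable : Integrable (angularFourier fun y => g (y - x)) := by
    refine (integrable_norm_iff ?_).mp ?_
    · exact (continuous_angularFourier (hg.comp_sub_right x)).aestronglyMeasurable
    · simpa only [norm_angularFourier_comp_sub] using hg_fourier.norm
  simp only [hψ, ← mul_assoc]
  rw [angularFourier_mul_eq_integral (g := fun y => g (y - x)) (integrable_mul_comp_sub hf hφ x)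
    (hg_cont.comp (continuous_sub_right x)) (hg.comp_sub_right x) translate_integrable, norm_mul]
  norm_cast
  rw [Real.norm_of_nonneg (by positivity)]
  gcongr
  refine norm_integral_le_of_norm_le (integrable_windowedFourierSup_mul hf hφ
    (hg_fourier.comp_sub_left ξ).norm) (.of_forall fun η => ?_)
  rw [norm_mul, norm_angularFourier_comp_sub]
  gcongr
  exact norm_angularFourier_le_windowedFourierSup hf hφ x η

end Fourier

theorem eq_ofReal_exp_neg_mul_mul_exp (z : ℂ) (r : ℝ) :
    z = Complex.ofReal (Real.exp (-r)) * (z * Complex.ofReal (Real.exp r)) := by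
  rw [mul_left_comm, ← Complex.ofReal_mul, ← Real.exp_add, neg_add_cancel, Real.exp_zero,
    Complex.ofReal_one, mul_one]

theorem inv_two_pi_pow_le_rpow_neg_half (n : ℕ) :
    ((2 * π) ^ n)⁻¹ ≤ (2 * π) ^ (-(n : ℝ) / 2) := by
  rw [← Real.rpow_natCast, ← Real.rpow_neg (by positivity)]
  exact Real.rpow_le_rpow_of_exponent_le (by linarith [Real.pi_gt_three])
    (by linarith [n.cast_nonneg (α := ℝ)])

/-- the pointwise convolution bound (estfop33).  Writing `ψ = Ψ·e^{-|·|²}`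
with `Ψ` Schwartz (so that `ψ·ψ₂` with `ψ₂ = e^{|·|²}` is the Schwartz function `Ψ`), for
bounded measurable `f`, all `x, ξ` and `t ∈ (0,1]`:
`|𝓕(f ψ((·−x)/t))(ξ)| ≤ (2π)^{-n/2} (H_{∞,f} * |𝓕(ψ(·/t)ψ₂)|)(ξ)`. -/
theorem stmt_16 (n : ℕ) (f : E n → ℂ) (hf_meas : Measurable f)
    (hf_bdd : ∃ B : ℝ, ∀ y, ‖f y‖ ≤ B)
    (Ψ : SchwartzMap (E n) ℂ) (x : E n) (t : ℝ) (ht : t ∈ Set.Ioc (0:ℝ) 1) (ξ : E n) :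
    ‖∫ y, f y * (Ψ (t⁻¹ • (y - x)) * Complex.ofReal (Real.exp (-‖t⁻¹ • (y - x)‖ ^ 2))) *
        eK y ξ‖
      ≤ (2 * Real.pi) ^ (-(n : ℝ) / 2) *
        ∫ η, Hinf f η *
          ‖∫ y, (Ψ (t⁻¹ • y) * Complex.ofReal (Real.exp (-‖t⁻¹ • y‖ ^ 2)) *
              Complex.ofReal (Real.exp (‖y‖ ^ 2))) * eK y (ξ - η)‖ := by
  obtain ⟨B, hB⟩ := hf_bdd
  have hf : MemLp f ∞ := memLp_top_of_bound hf_meas.aestronglyMeasurable B (.of_forall hB)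
  obtain ⟨G, hG⟩ :=
    exists_schwartzMap_eq_comp_smul_mul_exp Ψ ht.1.ne' ((abs_of_pos ht.1).trans_le ht.2)
  have sharp_bound := stmt_16_general hf integrable_exp_neg_norm_sq G.continuous G.integrable
    (integrable_angularFourier_schwartzMap G)
    (fun y => (eq_ofReal_exp_neg_mul_mul_exp _ _).trans (congrArg _ (congrFun hG y).symm)) x ξ
  rw [finrank_euclideanSpace_fin, hG] at sharp_bound
  exact sharp_bound.trans (mul_le_mul_of_nonneg_right (inv_two_pi_pow_le_rpow_neg_half n)
    (integral_nonneg fun η => mul_nonneg (windowedFourierSup_nonneg _ f η) (norm_nonneg _)))
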